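/- Let n ≥ 1, let J be a compact topological space, and let g : ℝⁿ × J → ℝⁿ be continuous such that for every unit vector φ ∈ ℝⁿ (with |φ| = 1) and every τ ∈ J, the map r ↦ ⟨φ, g(rφ, τ)⟩ is strictly increasing on ℝ and attains both a strictly negative value and a strictly positive value. Then the set {x ∈ ℝⁿ : g(x, τ) = 0 for some τ ∈ J} is bounded. -/

import Mathlib

open scoped RealInnerProductSpace

/-!
Every root of a monotone scalarized map lies below each point where the map is
positive. Positivity at a fixed radius `r` is an open condition on the pair `(φ, τ)`, and by
monotonicity these open sets grow with `r`. They cover the compact product of the unit sphere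
with `J`, so a single radius `R` works for all pairs, and no nonzero zero has norm `R` or more.
-/

theorem exists_forall_lt_of_monotone_of_lowerSemicontinuous {ι X α : Type*}
    [Preorder ι] [IsDirectedOrder ι] [Nonempty ι] [TopologicalSpace X] [CompactSpace X]
    [Preorder α] {f : ι → X → α} {a : α} (hf : Monotone f)
    (hlsc : ∀ i, LowerSemicontinuous (f i)) (hlt : ∀ x, ∃ i, a < f i x) :
    ∃ i, ∀ x, a < f i x := by
  have hopen (i : ι) : IsOpen {x | a < f i x} := (hlsc i).isOpen_preimage a
  have hcover : Set.univ ⊆ ⋃ i, {x | a < f i x} := fun x _ ↦ Set.mem_iUnion.2 (hlt x)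
  have hdir : Directed (· ⊆ ·) fun i ↦ {x | a < f i x} :=
    Monotone.directed_le fun _ _ hij x hx ↦ hx.trans_le (hf hij x)
  obtain ⟨i, hi⟩ := isCompact_univ.elim_directed_cover _ hopen hcover hdir
  exact ⟨i, fun x ↦ hi (Set.mem_univ x)⟩

section InnerProductSpace

variable {E : Type*} [NormedAddCommGroup E] [InnerProductSpace ℝ E]

theorem norm_lt_of_eq_zero_of_forall_inner_pos {v : E → E} {R : ℝ} {x : E}
    (hmono : ∀ φ : E, ‖φ‖ = 1 → Monotone fun r : ℝ ↦ ⟪φ, v (r • φ)⟫)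
    (hpos : ∀ φ : E, ‖φ‖ = 1 → 0 < ⟪φ, v (R • φ)⟫) (hx : x ≠ 0) (hvx : v x = 0) :
    ‖x‖ < R := by
  have hunit : ‖‖x‖⁻¹ • x‖ = 1 := norm_smul_inv_norm hx
  have hpolar : ‖x‖ • ‖x‖⁻¹ • x = x := smul_inv_smul₀ (norm_ne_zero_iff.2 hx) x
  refine (hmono _ hunit).reflect_lt ?_
  simpa only [hpolar, hvx, inner_zero_right] using hpos _ hunit

variable [FiniteDimensional ℝ E] {J : Type*} [TopologicalSpace J] [CompactSpace J]

theorem exists_radius_forall_inner_pos {g : E × J → E} (hcont : Continuous g)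
    (hmono : ∀ φ : E, ‖φ‖ = 1 → ∀ τ : J, Monotone fun r : ℝ ↦ ⟪φ, g (r • φ, τ)⟫)
    (hpos : ∀ φ : E, ‖φ‖ = 1 → ∀ τ : J, ∃ r : ℝ, 0 < ⟪φ, g (r • φ, τ)⟫) :
    ∃ R : ℝ, ∀ φ : E, ‖φ‖ = 1 → ∀ τ : J, 0 < ⟪φ, g (R • φ, τ)⟫ := by
  let f (r : ℝ) (p : Metric.sphere (0 : E) 1 × J) : ℝ := ⟪(p.1 : E), g (r • (p.1 : E), p.2)⟫
  have hf : Monotone f := fun _ _ hrs p ↦ hmono p.1 (norm_eq_of_mem_sphere p.1) p.2 hrs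
  have hfcont (r : ℝ) : Continuous (f r) := by fun_prop
  obtain ⟨R, hR⟩ := exists_forall_lt_of_monotone_of_lowerSemicontinuous hf
    (fun r ↦ (hfcont r).lowerSemicontinuous)
    (fun p ↦ hpos p.1 (norm_eq_of_mem_sphere p.1) p.2)
  exact ⟨R, fun φ hφ τ ↦ hR (⟨φ, mem_sphere_zero_iff_norm.2 hφ⟩, τ)⟩

theorem stmt_8_general {g : E × J → E} (hcont : Continuous g)
    (hmono : ∀ φ : E, ‖φ‖ = 1 → ∀ τ : J, Monotone fun r : ℝ ↦ ⟪φ, g (r • φ, τ)⟫)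
    (hpos : ∀ φ : E, ‖φ‖ = 1 → ∀ τ : J, ∃ r : ℝ, 0 < ⟪φ, g (r • φ, τ)⟫) :
    Bornology.IsBounded {x : E | ∃ τ : J, g (x, τ) = 0} := by
  obtain ⟨R, hR⟩ := exists_radius_forall_inner_pos hcont hmono hpos
  refine ((Metric.isBounded_ball (x := (0 : E)) (r := R)).insert 0).subset ?_
  rintro x ⟨τ, hzero⟩
  refine or_iff_not_imp_left.2 fun hx ↦ mem_ball_zero_iff.2 ?_
  exact norm_lt_of_eq_zero_of_forall_inner_pos (v := fun y ↦ g (y, τ))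
    (fun φ hφ ↦ hmono φ hφ τ) (fun φ hφ ↦ hR φ hφ τ) hx hzero

end InnerProductSpace

/-- If `g : ℝⁿ × J → ℝⁿ` is continuous on a compact space `J`, and for each unit
vector `φ` and each `τ ∈ J` the scalarized map `r ↦ ⟪φ, g (rφ, τ)⟫` is strictly
increasing and attains both a negative and a positive value, then the set of
zeros `{x : g (x, τ) = 0 for some τ ∈ J}` is bounded. -/
theorem stmt_8 (n : ℕ) (hn : 1 ≤ n)
    {J : Type*} [TopologicalSpace J] [CompactSpace J]
    (g : EuclideanSpace ℝ (Fin n) × J → EuclideanSpace ℝ (Fin n))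
    (hcont : Continuous g)
    (hmono : ∀ (φ : EuclideanSpace ℝ (Fin n)), ‖φ‖ = 1 → ∀ τ : J,
      StrictMono (fun r : ℝ => ⟪φ, g (r • φ, τ)⟫))
    (hsign : ∀ (φ : EuclideanSpace ℝ (Fin n)), ‖φ‖ = 1 → ∀ τ : J,
      (∃ rneg : ℝ, ⟪φ, g (rneg • φ, τ)⟫ < 0) ∧
      (∃ rpos : ℝ, 0 < ⟪φ, g (rpos • φ, τ)⟫)) :
    Bornology.IsBounded {x : EuclideanSpace ℝ (Fin n) | ∃ τ : J, g (x, τ) = 0} :=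
  stmt_8_general hcont (fun φ hφ τ ↦ (hmono φ hφ τ).monotone) fun φ hφ τ ↦ (hsign φ hφ τ).2
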